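/- arXiv:math/9911208 — 2 statements merged into one kernel-verified Lean document; each statement's English description precedes it below -/
import Mathlib

section
/- Let A and B be separable C*-algebras, let M(B) denote the multiplier algebra of B (with B embedded in M(B) as an ideal), and let π = (π_t)_{t∈[1,∞)} : A → M(B) be an asymptotic homomorphism such that π_t(a) − π_1(a) ∈ B for all t ∈ [1,∞) and all a ∈ A. Let (u_t)_{t∈[1,∞)} be a continuous approximate unit for B such that lim_{t→∞} ‖u_t π_1(a) − π_1(a) u_t‖ = 0 for all a ∈ A. Then there exists an increasing continuous function r : [1,∞) → [1,∞) with r(t) ≥ t for all t ∈ [1,∞) such that lim_{t→∞} ‖f(u_{r(t)}) π_1(a) − f(u_{r(t)}) π_t(a)‖ = 0 for every a ∈ A and every continuous function f : [0,1] → ℝ with f(0) = f(1) = 0. -/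
open Filter Set
open scoped MultiplierAlgebra

/-- An asymptotic homomorphism from `A` to `B`: a family `φ = (φ_t)_{t ∈ [1,∞)}` of maps
`A → B` such that `t ↦ φ_t(a)` is continuous on `[1,∞)` for every `a`, and which is
asymptotically star-preserving, linear and multiplicative as `t → ∞`. -/
def IsAsymptoticHom {A B : Type*} [NonUnitalNormedRing A] [StarRing A] [Module ℂ A]
    [NonUnitalNormedRing B] [StarRing B] [Module ℂ B] (φ : ℝ → A → B) : Prop :=
  (∀ a : A, ContinuousOn (fun t => φ t a) (Ici 1)) ∧
  (∀ a : A, Tendsto (fun t => ‖φ t (star a) - star (φ t a)‖) atTop (nhds 0)) ∧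
  (∀ (a b : A) (c : ℂ),
    Tendsto (fun t => ‖φ t (c • a + b) - c • φ t a - φ t b‖) atTop (nhds 0)) ∧
  (∀ a b : A, Tendsto (fun t => ‖φ t (a * b) - φ t a * φ t b‖) atTop (nhds 0))

/-!
Completing the square, `a⋆a + y² = 2‖a‖y` for some self-adjoint `y`, so that asymptotically
`φ_t(a)⋆φ_t(a) ≤ ‖a‖²` for an asymptotic homomorphism `φ`. Hence the curves `φ_t(a) - φ_1(a)` are
determined, up to a constant and an eventually small error, by those with `a` in a countable dense
set. An approximate unit of contractions converges uniformly on compact sets, so along a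
sufficiently fast reparametrization `r` it absorbs each of these countably many curves, and then
every curve `φ_t(a) - φ_1(a)`. Finally `f` is uniformly close on `[0, 1]` to functions of the form
`x ↦ g(x) (1 - x)`, and `1 - u_{r(t)}` annihilates the curve in the limit.
-/

section AsymptoticHom

namespace IsAsymptoticHom

section Algebra

variable {A D : Type*} [NonUnitalNormedRing A] [StarRing A] [Module ℂ A]
  [NonUnitalNormedRing D] [StarRing D] [Module ℂ D] {φ : ℝ → A → D}

lemma tendsto_star_sub (hφ : IsAsymptoticHom φ) (a : A) :
    Tendsto (fun t => φ t (star a) - star (φ t a)) atTop (nhds 0) :=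
  tendsto_zero_iff_norm_tendsto_zero.2 (hφ.2.1 a)

lemma tendsto_smul_add_sub (hφ : IsAsymptoticHom φ) (a b : A) (c : ℂ) :
    Tendsto (fun t => φ t (c • a + b) - c • φ t a - φ t b) atTop (nhds 0) :=
  tendsto_zero_iff_norm_tendsto_zero.2 (hφ.2.2.1 a b c)

lemma tendsto_mul_sub (hφ : IsAsymptoticHom φ) (a b : A) :
    Tendsto (fun t => φ t (a * b) - φ t a * φ t b) atTop (nhds 0) :=
  tendsto_zero_iff_norm_tendsto_zero.2 (hφ.2.2.2 a b)

lemma tendsto_zero (hφ : IsAsymptoticHom φ) : Tendsto (fun t => φ t 0) atTop (nhds 0) := by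
  simpa using (hφ.tendsto_smul_add_sub 0 0 1).neg

lemma tendsto_add_sub (hφ : IsAsymptoticHom φ) (a b : A) :
    Tendsto (fun t => φ t (a + b) - φ t a - φ t b) atTop (nhds 0) := by
  simpa using hφ.tendsto_smul_add_sub a b 1

lemma tendsto_smul_sub (hφ : IsAsymptoticHom φ) (c : ℂ) (a : A) :
    Tendsto (fun t => φ t (c • a) - c • φ t a) atTop (nhds 0) := by
  simpa using (hφ.tendsto_smul_add_sub a 0 c).add hφ.tendsto_zero

lemma tendsto_mul_add_mul_sub_smul (hφ : IsAsymptoticHom φ) {a y : A} {c : ℂ}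
    (h : star a * a + y * y = c • y) :
    Tendsto (fun t => φ t (star a) * φ t a + φ t y * φ t y - c • φ t y) atTop (nhds 0) := by
  have hlim := (((hφ.tendsto_smul_sub c y).sub (hφ.tendsto_add_sub (star a * a) (y * y))).sub
    (hφ.tendsto_mul_sub (star a) a)).sub (hφ.tendsto_mul_sub y y)
  simp only [h, sub_zero] at hlim
  refine hlim.congr fun t => ?_
  abel

end Algebra

end IsAsymptoticHom

lemma exists_isSelfAdjoint_add_mul_self_eq_smul {A : Type*} [NonUnitalCStarAlgebra A] {h : A}
    (hh : IsSelfAdjoint h) {c : ℝ} (hc : 0 ≤ c) (hhc : ‖h‖ ≤ c ^ 2) :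
    ∃ y : A, IsSelfAdjoint y ∧ h + y * y = (2 * c) • y := by
  let g : ℝ → ℝ := fun x => c - √(c ^ 2 - x)
  have hg : Continuous g := by fun_prop
  have hg0 : g 0 = 0 := by simp [g, Real.sqrt_sq hc]
  refine ⟨cfcₙ g h, cfcₙ_predicate g h, ?_⟩
  calc h + cfcₙ g h * cfcₙ g h = cfcₙ (fun x => x + g x * g x) h := by
        rw [cfcₙ_add (a := h) (fun x : ℝ => x) (fun x => g x * g x) (by fun_prop) rfl
          (by fun_prop) (by simp [hg0]), cfcₙ_mul g g h hg.continuousOn hg0 hg.continuousOn hg0,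
          cfcₙ_id' ℝ h]
    _ = cfcₙ (fun x => (2 * c) * g x) h := by
        refine cfcₙ_congr fun x hx => ?_
        have hxc : x ≤ c ^ 2 := (le_abs_self x).trans <|
          (NonUnitalIsometricContinuousFunctionalCalculus.norm_quasispectrum_le h hx hh).trans hhc
        have hsqrt := Real.sq_sqrt (sub_nonneg.2 hxc)
        simp only [g]
        linear_combination hsqrt
    _ = (2 * c) • cfcₙ g h := cfcₙ_const_mul (2 * c) g h hg.continuousOn hg0

section ApproximateSquares

variable {D : Type*}

lemma sq_norm_le_norm_star_mul_self_add [CStarAlgebra D] (p w : D) :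
    ‖p‖ ^ 2 ≤ ‖star p * p + star w * w‖ := by
  let _ := CStarAlgebra.spectralOrder D
  have _ := CStarAlgebra.spectralOrderedRing D
  rw [sq, ← CStarRing.norm_star_mul_self]
  exact CStarAlgebra.norm_le_norm_of_nonneg_of_le (star_mul_self_nonneg p)
    (le_add_of_nonneg_right (star_mul_self_nonneg w))

/-- If `q = p⋆`, `y = y⋆` and `qp + y² = 2cy` hold exactly, then `p⋆p + (c - y)⋆(c - y) = c²`. -/
lemma norm_lt_of_norm_mul_add_mul_self_sub_smul_le_of_unital [CStarAlgebra D] {p q y : D}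
    {c δ K : ℝ} (hq : ‖q - star p‖ ≤ δ) (hy : ‖y - star y‖ ≤ δ)
    (hqy : ‖q * p + y * y - (2 * c) • y‖ ≤ δ) (hδK : δ ≤ K)
    (hK : c ^ 2 + δ + 2 * δ * K < K ^ 2) : ‖p‖ < K := by
  set w : D := c • 1 - y with hw
  set m := max ‖p‖ ‖w‖
  have hsquares : star p * p + star w * w = (c ^ 2) • (1 : D) + (q * p + y * y - (2 * c) • y)
      - (q - star p) * p + (y - star y) * w := by
    simp only [hw, star_sub, star_smul, star_one, star_trivial, sub_mul, mul_sub, smul_mul_assoc,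
      mul_smul_comm, one_mul, mul_one]
    module
  have hone : ‖(c ^ 2) • (1 : D)‖ ≤ c ^ 2 := by
    rcases subsingleton_or_nontrivial D with _ | _
    · simpa only [Subsingleton.elim (1 : D) 0, smul_zero, norm_zero] using sq_nonneg c
    · rw [norm_smul, CStarRing.norm_one, mul_one, Real.norm_of_nonneg (sq_nonneg c)]
  have hsum : ‖star p * p + star w * w‖ ≤ c ^ 2 + δ + δ * m + δ * m := by
    rw [hsquares]
    refine norm_add_le_of_le (norm_sub_le_of_le (norm_add_le_of_le hone hqy) ?_) ?_
    · exact norm_mul_le_of_le hq (le_max_left _ _)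
    · exact norm_mul_le_of_le hy (le_max_right _ _)
  have hmax : m ^ 2 ≤ ‖star p * p + star w * w‖ := by
    rcases max_choice ‖p‖ ‖w‖ with hm | hm
    · simpa only [m, hm] using sq_norm_le_norm_star_mul_self_add p w
    · simpa only [m, hm, add_comm] using sq_norm_le_norm_star_mul_self_add w p
  refine (le_max_left _ _ : ‖p‖ ≤ m).trans_lt ?_
  by_contra! hKm
  nlinarith [hmax.trans hsum, (norm_nonneg _).trans hq]

lemma norm_lt_of_norm_mul_add_mul_self_sub_smul_le [NonUnitalCStarAlgebra D] {p q y : D}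
    {c δ K : ℝ} (hq : ‖q - star p‖ ≤ δ) (hy : ‖y - star y‖ ≤ δ)
    (hqy : ‖q * p + y * y - (2 * c) • y‖ ≤ δ) (hδK : δ ≤ K)
    (hK : c ^ 2 + δ + 2 * δ * K < K ^ 2) : ‖p‖ < K := by
  rw [← Unitization.norm_inr (𝕜 := ℂ)] at hq hy hqy ⊢
  simp only [Unitization.inr_sub, Unitization.inr_add, Unitization.inr_mul, Unitization.inr_star,
    Unitization.inr_smul] at hq hy hqy
  exact norm_lt_of_norm_mul_add_mul_self_sub_smul_le_of_unital hq hy hqy hδK hK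

end ApproximateSquares

namespace IsAsymptoticHom

variable {A D : Type*} [NonUnitalCStarAlgebra A] [NonUnitalCStarAlgebra D] {φ : ℝ → A → D}

lemma eventually_norm_lt (hφ : IsAsymptoticHom φ) {a : A} {K : ℝ} (ha : ‖a‖ < K) :
    ∀ᶠ t in atTop, ‖φ t a‖ < K := by
  obtain ⟨y, hy, hay⟩ := exists_isSelfAdjoint_add_mul_self_eq_smul
    (IsSelfAdjoint.star_mul_self a) (norm_nonneg a) (by rw [CStarRing.norm_star_mul_self, sq])
  obtain ⟨δ, hδ, hδK, hK⟩ : ∃ δ > 0, δ ≤ K ∧ ‖a‖ ^ 2 + δ + 2 * δ * K < K ^ 2 := by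
    have hlim : Tendsto (fun δ : ℝ => ‖a‖ ^ 2 + δ + 2 * δ * K) (nhdsWithin 0 (Ioi 0))
        (nhds (‖a‖ ^ 2)) :=
      tendsto_nhdsWithin_of_tendsto_nhds <| Continuous.tendsto' (by fun_prop) _ _ (by simp)
    have hlt : ‖a‖ ^ 2 < K ^ 2 := by gcongr
    have hK0 : 0 < K := (norm_nonneg a).trans_lt ha
    obtain ⟨δ, ⟨hδ, hδK⟩, hδ0⟩ := ((hlim.eventually_lt_const hlt).and
      (nhdsWithin_le_nhds (eventually_le_nhds hK0))).and self_mem_nhdsWithin |>.exists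
    exact ⟨δ, hδ0, hδK, hδ⟩
  rw [← Complex.coe_smul] at hay
  filter_upwards [(hφ.tendsto_star_sub a).norm.eventually_le_const (norm_zero.trans_lt hδ),
    (hφ.tendsto_star_sub y).norm.eventually_le_const (norm_zero.trans_lt hδ),
    (hφ.tendsto_mul_add_mul_sub_smul hay).norm.eventually_le_const (norm_zero.trans_lt hδ)]
    with t hta hty htay
  rw [hy.star_eq] at hty
  exact norm_lt_of_norm_mul_add_mul_self_sub_smul_le hta hty htay hδK hK

lemma eventually_norm_sub_lt (hφ : IsAsymptoticHom φ) {a b : A} {K : ℝ} (hab : ‖a - b‖ < K) :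
    ∀ᶠ t in atTop, ‖φ t a - φ t b‖ < K := by
  obtain ⟨L, hL, hLK⟩ := exists_between hab
  have hlim : Tendsto (fun t => ‖φ t (a - b + b) - φ t (a - b) - φ t b‖) atTop (nhds 0) := by
    simpa using (hφ.tendsto_add_sub (a - b) b).norm
  filter_upwards [hφ.eventually_norm_lt hL, hlim.eventually_lt_const (sub_pos.2 hLK)]
    with t hsub hadd
  rw [sub_add_cancel, sub_right_comm] at hadd
  linarith [norm_sub_norm_le (φ t a - φ t b) (φ t (a - b))]

end IsAsymptoticHom

end AsymptoticHom

section Reparametrization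

/-- The averages `∫ x in t..t+1, g x` of a monotone `g` depend continuously on `t`. -/
lemma exists_continuous_monotone_ge {g : ℝ → ℝ} (hg : Monotone g) :
    ∃ r : ℝ → ℝ, Continuous r ∧ Monotone r ∧ ∀ t, g t ≤ r t := by
  have hint : ∀ a b, IntervalIntegrable g MeasureTheory.volume a b := fun _ _ =>
    hg.intervalIntegrable
  have hshift : ∀ t, ∫ x in t..t + 1, g x = ∫ x in (0 : ℝ)..1, g (t + x) := fun t => by simp
  refine ⟨fun t => ∫ x in t..t + 1, g x, ?_, fun s t hst => ?_, fun t => ?_⟩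
  · have hprimitive := intervalIntegral.continuous_primitive hint 0
    have hcont : Continuous fun t => (∫ x in (0 : ℝ)..t + 1, g x) - ∫ x in (0 : ℝ)..t, g x :=
      (hprimitive.comp (continuous_add_const 1)).sub hprimitive
    exact hcont.congr fun t => intervalIntegral.integral_interval_sub_left (hint _ _) (hint _ _)
  · simp only [hshift]
    exact intervalIntegral.integral_mono_on zero_le_one
      (hg.comp (monotone_id.const_add s)).intervalIntegrable
      (hg.comp (monotone_id.const_add t)).intervalIntegrable fun x _ => hg (by gcongr)
  · calc g t = ∫ _ in t..t + 1, g t := by simp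
      _ ≤ ∫ x in t..t + 1, g x :=
        intervalIntegral.integral_mono_on (by simp) (by simp) (hint _ _) fun x hx => hg hx.1

lemma exists_continuous_monotone_forall_floor {P : ℕ → ℝ → Prop}
    (hP : ∀ n, ∀ᶠ s in atTop, P n s) :
    ∃ r : ℝ → ℝ, Continuous r ∧ Monotone r ∧ (∀ t, t ≤ r t) ∧ ∀ t, P ⌊t⌋₊ (r t) := by
  choose S hS using fun n => eventually_atTop.1 (hP n)
  have hmono : Monotone fun t : ℝ => max t (partialSups S ⌊t⌋₊) :=
    monotone_id.max ((partialSups_monotone S).comp Nat.floor_mono)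
  obtain ⟨r, hr_cont, hr_mono, hr⟩ := exists_continuous_monotone_ge hmono
  exact ⟨r, hr_cont, hr_mono, fun t => (le_max_left _ _).trans (hr t), fun t =>
    hS _ _ ((le_partialSups S _).trans ((le_max_right _ _).trans (hr t)))⟩

end Reparametrization

section Absorption

variable {ι R : Type*} [NonUnitalSeminormedRing R] {l : Filter ι}

lemma norm_mul_sub_self_le {v : R} (hv : ‖v‖ ≤ 1) (x y : R) :
    ‖v * x - x‖ ≤ ‖v * y - y‖ + 2 * ‖x - y‖ := by
  have hsub : v * x - x = (v * y - y) + (v * (x - y) - (x - y)) := by rw [mul_sub]; abel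
  have hmul : ‖v * (x - y)‖ ≤ ‖x - y‖ :=
    (norm_mul_le _ _).trans (mul_le_of_le_one_left (norm_nonneg _) hv)
  rw [hsub]
  linarith [norm_add_le (v * y - y) (v * (x - y) - (x - y)), norm_sub_le (v * (x - y)) (x - y)]

lemma eventually_forall_mem_norm_mul_sub_lt_of_isCompact {v : ι → R}
    (hv : ∀ᶠ i in l, ‖v i‖ ≤ 1) {K : Set R} (hK : IsCompact K)
    (hvK : ∀ x ∈ K, Tendsto (fun i => v i * x) l (nhds x)) {ε : ℝ} (hε : 0 < ε) :
    ∀ᶠ i in l, ∀ x ∈ K, ‖v i * x - x‖ < ε := by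
  obtain ⟨F, hF⟩ := hK.elim_nhds_subcover' (fun x _ => Metric.ball x (ε / 4))
    fun x _ => Metric.ball_mem_nhds x (by positivity)
  have hcenters : ∀ᶠ i in l, ∀ y ∈ F, ‖v i * y - y‖ < ε / 2 :=
    (eventually_all_finset F).2 fun y _ =>
      (tendsto_iff_norm_sub_tendsto_zero.1 (hvK y y.2)).eventually_lt_const (half_pos hε)
  filter_upwards [hv, hcenters] with i hi hcenter x hx
  obtain ⟨y, hyF, hxy⟩ := mem_iUnion₂.1 (hF hx)
  rw [mem_ball_iff_norm] at hxy
  linarith [norm_mul_sub_self_le hi x y, hcenter y hyF]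

lemma tendsto_mul_sub_self_of_forall_eventually_norm_sub_le {v x : ι → R}
    (hv : ∀ᶠ i in l, ‖v i‖ ≤ 1)
    (hx : ∀ ε > 0, ∃ y : ι → R, Tendsto (fun i => v i * y i - y i) l (nhds 0) ∧
      ∀ᶠ i in l, ‖x i - y i‖ ≤ ε) :
    Tendsto (fun i => v i * x i - x i) l (nhds 0) := by
  rw [NormedAddGroup.tendsto_nhds_zero]
  intro ε hε
  obtain ⟨y, hy, hxy⟩ := hx (ε / 4) (by positivity)
  filter_upwards [hv, hxy, hy.norm.eventually_lt_const (norm_zero.trans_lt (half_pos hε))]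
    with i hvi hxyi hyi
  linarith [norm_mul_sub_self_le hvi (x i) (y i)]

lemma exists_reparametrization_tendsto_seq_mul_sub_self {u : ℝ → R}
    (hu : ∀ᶠ s in atTop, ‖u s‖ ≤ 1) {x : ℕ → ℝ → R} (hx : ∀ i, ContinuousOn (x i) (Ici 1))
    (hux : ∀ i, ∀ t ∈ Ici (1 : ℝ), Tendsto (fun s => u s * x i t) atTop (nhds (x i t))) :
    ∃ r : ℝ → ℝ, Continuous r ∧ Monotone r ∧ (∀ t, t ≤ r t) ∧
      ∀ i, Tendsto (fun t => u (r t) * x i t - x i t) atTop (nhds 0) := by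
  have hunif : ∀ n : ℕ, ∀ᶠ s in atTop, ∀ i ∈ Finset.range (n + 1),
      ∀ t ∈ Icc (1 : ℝ) (n + 1), ‖u s * x i t - x i t‖ < 1 / ((n : ℝ) + 1) := fun n => by
    refine (eventually_all_finset _).2 fun i _ => ?_
    have hcompact := (isCompact_Icc (b := (n + 1 : ℝ))).image_of_continuousOn
      ((hx i).mono Icc_subset_Ici_self)
    simpa only [forall_mem_image] using eventually_forall_mem_norm_mul_sub_lt_of_isCompact hu
      hcompact (forall_mem_image.2 fun t ht => hux i t ht.1) Nat.one_div_pos_of_nat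
  obtain ⟨r, hr_cont, hr_mono, hr_ge, hr⟩ := exists_continuous_monotone_forall_floor hunif
  refine ⟨r, hr_cont, hr_mono, hr_ge, fun i => ?_⟩
  have hlim : Tendsto (fun t : ℝ => 1 / ((⌊t⌋₊ : ℝ) + 1)) atTop (nhds 0) :=
    tendsto_one_div_add_atTop_nhds_zero_nat.comp tendsto_nat_floor_atTop
  refine squeeze_zero_norm' ?_ hlim
  filter_upwards [eventually_ge_atTop 1, eventually_ge_atTop (i : ℝ)] with t ht hit
  exact (hr t i (Finset.mem_range_succ_iff.2 (Nat.le_floor hit)) t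
    ⟨ht, (Nat.lt_floor_add_one t).le⟩).le

end Absorption

section FunctionalCalculus

lemma exists_continuousOn_forall_norm_sub_mul_one_sub_le {f : ℝ → ℝ}
    (hf : ContinuousOn f (Icc 0 1)) (hf0 : f 0 = 0) (hf1 : f 1 = 0) {ε : ℝ} (hε : 0 < ε) :
    ∃ g : ℝ → ℝ, ContinuousOn g (Icc 0 1) ∧ g 0 = 0 ∧
      ∀ x ∈ Icc (0 : ℝ) 1, ‖f x - g x * (1 - x)‖ ≤ ε := by
  obtain ⟨δ, hδ, hfδ⟩ := Metric.continuousOn_iff.1 hf 1 (right_mem_Icc.2 zero_le_one) ε hε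
  have hpos : ∀ x : ℝ, 0 < max (1 - x) (δ / 2) := fun x => lt_max_of_lt_right (half_pos hδ)
  refine ⟨fun x => f x / max (1 - x) (δ / 2), hf.div (by fun_prop) fun x _ => (hpos x).ne',
    by simp [hf0], fun x hx => ?_⟩
  have hx1 : 0 ≤ 1 - x := sub_nonneg.2 hx.2
  have hfactor : f x - f x / max (1 - x) (δ / 2) * (1 - x)
      = f x * (1 - (1 - x) / max (1 - x) (δ / 2)) := by ring
  rw [hfactor, norm_mul]
  rcases le_total (δ / 2) (1 - x) with hfar | hnear
  · rw [max_eq_left hfar, div_self ((half_pos hδ).trans_le hfar).ne']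
    simpa using hε.le
  · have hfx : ‖f x‖ ≤ ε := by
      have hdist : dist x 1 < δ := by
        rw [dist_comm, Real.dist_eq, abs_of_nonneg hx1]
        linarith
      simpa only [hf1, dist_zero_right] using (hfδ x hx hdist).le
    have hratio0 : 0 ≤ (1 - x) / max (1 - x) (δ / 2) := div_nonneg hx1 (hpos x).le
    have hratio1 : (1 - x) / max (1 - x) (δ / 2) ≤ 1 := (div_le_one (hpos x)).2 (le_max_left _ _)
    have hcorr : ‖1 - (1 - x) / max (1 - x) (δ / 2)‖ ≤ 1 := by
      rw [Real.norm_of_nonneg (by linarith)]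
      linarith
    exact (mul_le_of_le_one_right (norm_nonneg _) hcorr).trans hfx

variable {D : Type*} [NonUnitalCStarAlgebra D]

lemma norm_le_one_of_quasispectrum_subset_Icc {v : D} (hv : IsSelfAdjoint v)
    (hspec : quasispectrum ℝ v ⊆ Icc 0 1) : ‖v‖ ≤ 1 := by
  rw [← cfcₙ_id' ℝ v]
  refine norm_cfcₙ_le fun x hx => ?_
  rw [Real.norm_of_nonneg (hspec hx).1]
  exact (hspec hx).2

lemma quasispectrum_subset_Icc_of_norm_le_one [PartialOrder D] [StarOrderedRing D] {v : D}
    (hv : 0 ≤ v) (hv1 : ‖v‖ ≤ 1) : quasispectrum ℝ v ⊆ Icc 0 1 := fun x hx =>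
  ⟨quasispectrum_nonneg_of_nonneg v hv x hx, (le_abs_self x).trans <|
    (NonUnitalIsometricContinuousFunctionalCalculus.norm_quasispectrum_le v hx
      (IsSelfAdjoint.of_nonneg hv)).trans hv1⟩

lemma exists_forall_norm_cfcₙ_mul_le {f : ℝ → ℝ} (hf : ContinuousOn f (Icc 0 1)) (hf0 : f 0 = 0)
    (hf1 : f 1 = 0) {ε : ℝ} (hε : 0 < ε) :
    ∃ C : ℝ, ∀ v b : D, IsSelfAdjoint v → quasispectrum ℝ v ⊆ Icc 0 1 →
      ‖cfcₙ f v * b‖ ≤ C * ‖v * b - b‖ + ε * ‖b‖ := by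
  obtain ⟨g, hg, hg0, hfg⟩ := exists_continuousOn_forall_norm_sub_mul_one_sub_le hf hf0 hf1 hε
  obtain ⟨C, hC⟩ := isCompact_Icc.exists_bound_of_continuousOn hg
  refine ⟨C, fun v b hv hspec => ?_⟩
  have hfv := hf.mono hspec
  have hgv := hg.mono hspec
  have hgxv : ContinuousOn (fun x => g x * x) (quasispectrum ℝ v) := hgv.mul continuousOn_id
  have hcfc : cfcₙ (fun x => f x - g x * (1 - x)) v
      = cfcₙ f v - (cfcₙ g v - cfcₙ g v * v) := by
    calc cfcₙ (fun x => f x - g x * (1 - x)) v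
        = cfcₙ (fun x => f x - (g x - g x * x)) v := by simp only [mul_sub, mul_one]
      _ = cfcₙ f v - (cfcₙ g v - cfcₙ (fun x => g x * x) v) := by
        rw [cfcₙ_sub f (fun x => g x - g x * x) v hfv hf0 (hgv.sub hgxv) (by simp [hg0]),
          cfcₙ_sub g (fun x => g x * x) v hgv hg0 hgxv (by simp)]
      _ = cfcₙ f v - (cfcₙ g v - cfcₙ g v * v) := by
        rw [cfcₙ_mul g (fun x => x) v hgv hg0, cfcₙ_id' ℝ v]
  have hsplit : cfcₙ f v * b
      = cfcₙ (fun x => f x - g x * (1 - x)) v * b - cfcₙ g v * (v * b - b) := by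
    rw [hcfc]
    noncomm_ring
  rw [hsplit, add_comm]
  exact norm_sub_le_of_le
    (norm_mul_le_of_le (norm_cfcₙ_le fun x hx => hfg x (hspec hx)) le_rfl)
    (norm_mul_le_of_le (norm_cfcₙ_le fun x hx => hC x (hspec hx)) le_rfl)

lemma tendsto_cfcₙ_mul_zero {ι : Type*} {l : Filter ι} {v x : ι → D}
    (hv : ∀ᶠ i in l, IsSelfAdjoint (v i)) (hspec : ∀ᶠ i in l, quasispectrum ℝ (v i) ⊆ Icc 0 1)
    (hx : l.IsBoundedUnder (· ≤ ·) fun i => ‖x i‖)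
    (hvx : Tendsto (fun i => v i * x i - x i) l (nhds 0))
    {f : ℝ → ℝ} (hf : ContinuousOn f (Icc 0 1)) (hf0 : f 0 = 0) (hf1 : f 1 = 0) :
    Tendsto (fun i => cfcₙ f (v i) * x i) l (nhds 0) := by
  rw [NormedAddGroup.tendsto_nhds_zero]
  intro ε hε
  obtain ⟨M, hM0, hM⟩ : ∃ M > 0, ∀ᶠ i in l, ‖x i‖ ≤ M := by
    obtain ⟨M, hM⟩ := hx
    exact ⟨max M 1, by positivity, (eventually_map.1 hM).mono fun _ => le_max_of_le_left⟩
  obtain ⟨C, hC⟩ := exists_forall_norm_cfcₙ_mul_le (D := D) hf hf0 hf1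
    (show 0 < ε / (2 * M) by positivity)
  have hlim : Tendsto (fun i => C * ‖v i * x i - x i‖) l (nhds 0) := by
    simpa using hvx.norm.const_mul C
  filter_upwards [hv, hspec, hM, hlim.eventually_lt_const (half_pos hε)]
    with i hvi hspeci hMi hCi
  calc ‖cfcₙ f (v i) * x i‖ ≤ C * ‖v i * x i - x i‖ + ε / (2 * M) * ‖x i‖ := hC _ _ hvi hspeci
    _ < ε / 2 + ε / (2 * M) * M := add_lt_add_of_lt_of_le hCi (by gcongr)
    _ = ε := by field_simp; norm_num

end FunctionalCalculus

section Main

variable {A D : Type*} [NonUnitalCStarAlgebra A] [NonUnitalCStarAlgebra D] {φ : ℝ → A → D}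

/-- As `φ 1` need not be continuous, the curves `φ t a - φ 1 a` and `φ t b - φ 1 b` of nearby `a`
and `b` are close only up to a constant; freezing both at a large time `T` supplies it. -/
lemma IsAsymptoticHom.tendsto_mul_sub_self_of_denseRange (hφ : IsAsymptoticHom φ) {v : ℝ → D}
    (hv : ∀ᶠ t in atTop, ‖v t‖ ≤ 1)
    (hv_lim : ∀ t ∈ Ici (1 : ℝ), ∀ a,
      Tendsto (fun s => v s * (φ t a - φ 1 a)) atTop (nhds (φ t a - φ 1 a)))
    {κ : Type*} {d : κ → A} (hd : DenseRange d)
    (hvd : ∀ i, Tendsto (fun t => v t * (φ t (d i) - φ 1 (d i)) - (φ t (d i) - φ 1 (d i)))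
      atTop (nhds 0)) (a : A) :
    Tendsto (fun t => v t * (φ t a - φ 1 a) - (φ t a - φ 1 a)) atTop (nhds 0) := by
  refine tendsto_mul_sub_self_of_forall_eventually_norm_sub_le hv fun ε hε => ?_
  obtain ⟨i, hi⟩ := hd.exists_dist_lt a (half_pos hε)
  have hclose := hφ.eventually_norm_sub_lt (dist_eq_norm a (d i) ▸ hi)
  obtain ⟨T, hT, hT1⟩ := (hclose.and (eventually_ge_atTop 1)).exists
  set c : D := (φ T a - φ 1 a) - (φ T (d i) - φ 1 (d i)) with hc
  have hvc : Tendsto (fun t => v t * c - c) atTop (nhds 0) := by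
    simpa only [hc, mul_sub] using
      tendsto_sub_nhds_zero_iff.2 ((hv_lim T hT1 a).sub (hv_lim T hT1 (d i)))
  refine ⟨fun t => (φ t (d i) - φ 1 (d i)) + c, ?_, ?_⟩
  · simpa only [mul_add, add_sub_add_comm, add_zero] using (hvd i).add hvc
  · filter_upwards [hclose] with t ht
    calc ‖φ t a - φ 1 a - ((φ t (d i) - φ 1 (d i)) + c)‖
        = ‖(φ t a - φ t (d i)) - (φ T a - φ T (d i))‖ := by rw [hc]; congr 1; abel
      _ ≤ ε / 2 + ε / 2 := norm_sub_le_of_le ht.le hT.le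
      _ = ε := add_halves ε

lemma IsAsymptoticHom.exists_reparametrization_tendsto_mul_sub_self
    [TopologicalSpace.SeparableSpace A] (hφ : IsAsymptoticHom φ) {u : ℝ → D}
    (hu : ∀ᶠ s in atTop, ‖u s‖ ≤ 1)
    (hu_lim : ∀ t ∈ Ici (1 : ℝ), ∀ a,
      Tendsto (fun s => u s * (φ t a - φ 1 a)) atTop (nhds (φ t a - φ 1 a))) :
    ∃ r : ℝ → ℝ, Continuous r ∧ Monotone r ∧ (∀ t, t ≤ r t) ∧
      ∀ a, Tendsto (fun t => u (r t) * (φ t a - φ 1 a) - (φ t a - φ 1 a)) atTop (nhds 0) := by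
  let d := TopologicalSpace.denseSeq A
  obtain ⟨r, hr_cont, hr_mono, hr_ge, hr⟩ := exists_reparametrization_tendsto_seq_mul_sub_self hu
    (fun i => (hφ.1 (d i)).sub (continuousOn_const (c := φ 1 (d i))))
    fun i t ht => hu_lim t ht (d i)
  have hr_top : Tendsto r atTop atTop := tendsto_atTop_mono hr_ge tendsto_id
  exact ⟨r, hr_cont, hr_mono, hr_ge, hφ.tendsto_mul_sub_self_of_denseRange (hr_top.eventually hu)
    (fun t ht a => (hu_lim t ht a).comp hr_top) (TopologicalSpace.denseRange_denseSeq A) hr⟩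

lemma IsAsymptoticHom.isBoundedUnder_norm_sub (hφ : IsAsymptoticHom φ) (a : A) (c : D) :
    atTop.IsBoundedUnder (· ≤ ·) fun t => ‖φ t a - c‖ := by
  refine ⟨‖a‖ + 1 + ‖c‖, eventually_map.2 ?_⟩
  filter_upwards [hφ.eventually_norm_lt (lt_add_one ‖a‖)] with t ht
  exact norm_sub_le_of_le ht.le le_rfl

theorem stmt_2_general [TopologicalSpace.SeparableSpace A] (hφ : IsAsymptoticHom φ) {u : ℝ → D}
    (hu : ∀ t ∈ Ici (1 : ℝ), IsSelfAdjoint (u t))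
    (hu_spec : ∀ t ∈ Ici (1 : ℝ), quasispectrum ℝ (u t) ⊆ Icc 0 1)
    (hu_lim : ∀ t ∈ Ici (1 : ℝ), ∀ a,
      Tendsto (fun s => u s * (φ t a - φ 1 a)) atTop (nhds (φ t a - φ 1 a))) :
    ∃ r : ℝ → ℝ, ContinuousOn r (Ici 1) ∧ MonotoneOn r (Ici 1) ∧
      (∀ t ∈ Ici (1 : ℝ), t ≤ r t) ∧
      ∀ a : A, ∀ f : ℝ → ℝ, ContinuousOn f (Icc 0 1) → f 0 = 0 → f 1 = 0 →
        Tendsto (fun t => ‖cfcₙ f (u (r t)) * φ 1 a - cfcₙ f (u (r t)) * φ t a‖)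
          atTop (nhds 0) := by
  have hge := eventually_ge_atTop (1 : ℝ)
  obtain ⟨r, hr_cont, hr_mono, hr_ge, hr⟩ := hφ.exists_reparametrization_tendsto_mul_sub_self
    (hge.mono fun s hs => norm_le_one_of_quasispectrum_subset_Icc (hu s hs) (hu_spec s hs)) hu_lim
  refine ⟨r, hr_cont.continuousOn, hr_mono.monotoneOn _, fun t _ => hr_ge t,
    fun a f hf hf0 hf1 => ?_⟩
  have hlim := tendsto_cfcₙ_mul_zero (hge.mono fun t ht => hu _ (ht.trans (hr_ge t)))
    (hge.mono fun t ht => hu_spec _ (ht.trans (hr_ge t))) (hφ.isBoundedUnder_norm_sub a (φ 1 a))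
    (hr a) hf hf0 hf1
  simpa only [mul_sub, norm_sub_rev, norm_zero] using hlim.norm

end Main

section Multiplier

open scoped CStarAlgebra

variable {B : Type*} [NonUnitalCStarAlgebra B]

lemma isSelfAdjoint_coe_multiplier {b : B} (hb : IsSelfAdjoint b) :
    IsSelfAdjoint (b : 𝓜(ℂ, B)) :=
  hb.map (DoubleCentralizer.coeHom (𝕜 := ℂ) (A := B))

lemma quasispectrum_coe_multiplier_subset_Icc [PartialOrder B] [StarOrderedRing B] {b : B}
    (hb : 0 ≤ b) (hb1 : ‖b‖ ≤ 1) : quasispectrum ℝ (b : 𝓜(ℂ, B)) ⊆ Icc 0 1 :=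
  (NonUnitalAlgHom.quasispectrum_apply_subset' (R := ℝ) ℂ
    (DoubleCentralizer.coeHom (𝕜 := ℂ) (A := B)) b).trans
    (quasispectrum_subset_Icc_of_norm_le_one hb hb1)

lemma tendsto_coe_multiplier_mul {ι : Type*} {l : Filter ι} {u : ι → B} {b : B}
    (h : Tendsto (fun i => ‖u i * b - b‖) l (nhds 0)) :
    Tendsto (fun i => (u i : 𝓜(ℂ, B)) * (b : 𝓜(ℂ, B))) l (nhds (b : 𝓜(ℂ, B))) := by
  have hcoe := ((map_continuous (DoubleCentralizer.coeHom (𝕜 := ℂ) (A := B))).tendsto b).comp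
    (tendsto_iff_norm_sub_tendsto_zero.2 h)
  exact hcoe.congr fun i => map_mul (DoubleCentralizer.coeHom (𝕜 := ℂ) (A := B)) (u i) b

end Multiplier

/-- Let `π : A → M(B)` be an asymptotic homomorphism with `π_t(a) - π_1(a) ∈ B`,
and let `(u_t)` be a continuous approximate unit for `B` asymptotically commuting with
`π_1(A)`. Then there is an increasing continuous `r : [1,∞) → [1,∞)` with `r(t) ≥ t` such that
`lim_{t→∞} ‖f(u_{r(t)})π_1(a) - f(u_{r(t)})π_t(a)‖ = 0` for all `a ∈ A` and all continuous
`f : [0,1] → ℝ` with `f(0) = f(1) = 0`. -/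
theorem stmt_2 {A B : Type*} [NonUnitalCStarAlgebra A] [TopologicalSpace.SeparableSpace A]
    [NonUnitalCStarAlgebra B] [TopologicalSpace.SeparableSpace B]
    [PartialOrder B] [StarOrderedRing B]
    (π : ℝ → A → 𝓜(ℂ, B)) (hπ : IsAsymptoticHom π)
    (hπB : ∀ t ∈ Ici (1:ℝ), ∀ a : A, ∃ b : B, π t a - π 1 a = (b : 𝓜(ℂ, B)))
    (u : ℝ → B)
    (hu_pos : ∀ t ∈ Ici (1:ℝ), 0 ≤ u t) (hu_norm : ∀ t ∈ Ici (1:ℝ), ‖u t‖ ≤ 1)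
    (hu_cont : ContinuousOn u (Ici 1))
    (hu_approx : ∀ b : B, Tendsto (fun t => ‖u t * b - b‖) atTop (nhds 0))
    (hu_comm : ∀ a : A,
      Tendsto (fun t => ‖(u t : 𝓜(ℂ, B)) * π 1 a - π 1 a * (u t : 𝓜(ℂ, B))‖) atTop (nhds 0)) :
    ∃ r : ℝ → ℝ, ContinuousOn r (Ici 1) ∧ MonotoneOn r (Ici 1) ∧
      (∀ t ∈ Ici (1:ℝ), t ≤ r t) ∧
      ∀ a : A, ∀ f : ℝ → ℝ, ContinuousOn f (Icc 0 1) → f 0 = 0 → f 1 = 0 →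
        Tendsto
          (fun t => ‖(cfcₙ f (u (r t)) : 𝓜(ℂ, B)) * π 1 a -
            (cfcₙ f (u (r t)) : 𝓜(ℂ, B)) * π t a‖) atTop (nhds 0) :=
  stmt_2_general (u := fun t => (u t : 𝓜(ℂ, B))) hπ
    (fun t ht => isSelfAdjoint_coe_multiplier (.of_nonneg (hu_pos t ht)))
    (fun t ht => quasispectrum_coe_multiplier_subset_Icc (hu_pos t ht) (hu_norm t ht))
    fun t ht a => (hπB t ht a).elim fun _ hb => hb ▸ tendsto_coe_multiplier_mul (hu_approx _)
end

section
/- Let A and B be separable C*-algebras and let φ = (φ_t)_{t∈[1,∞)} : A → B be an asymptotic homomorphism. Then there exists an asymptotic homomorphism φ' = (φ'_t)_{t∈[1,∞)} : A → B which is equivalent to φ, i.e. lim_{t→∞} ‖φ_t(a) − φ'_t(a)‖ = 0 for all a ∈ A, and which is equicontinuous: for every a ∈ A and every ε > 0 there exists δ > 0 such that for all t ∈ [1,∞) and all b ∈ A with ‖a − b‖ < δ one has ‖φ'_t(a) − φ'_t(b)‖ < ε. -/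
open Filter Set

/-!
The bounded continuous functions `[1, ∞) → B` modulo those vanishing at infinity form a Banach
space `Q`, and an asymptotic homomorphism induces a Lipschitz map `A → Q`. By the theorem of Bartle
and Graves the quotient map onto `Q` has a continuous, in general nonlinear, section. Composing,
we get a continuous map from `A` to the bounded continuous functions with the sup norm, and
continuity for the sup norm is equicontinuity.

The Lipschitz bound comes from the identity `a* a + c² = 2 ‖a‖ c`, solved by a self-adjoint `c`:
it forces `‖φ_t(a)‖² ≲ 2 ‖a‖ ‖φ_t(c)‖` and likewise for `‖φ_t(c)‖²`.
-/

open scoped Topology BoundedContinuousFunction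

section BartleGraves

variable {E F : Type*} [NormedAddCommGroup E] [NormedSpace ℝ E]
  [NormedAddCommGroup F] [NormedSpace ℝ F]

lemma exists_continuousMap_approx_rightInverse (T : E →L[ℝ] F) {C : ℝ}
    (hC : ∀ y, ∃ x, T x = y ∧ ‖x‖ ≤ C * ‖y‖) (g : C(F, E)) {η : ℝ} (hη : 0 < η) :
    ∃ g' : C(F, E), ∀ y, dist (g' y) (g y) < C * dist (T (g y)) y + η ∧
      dist (T (g' y)) y < η := by
  let S (y : F) : Set E := Metric.ball (g y) (C * dist (T (g y)) y + η) ∩ T ⁻¹' Metric.ball y η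
  have hS (y : F) : Convex ℝ (S y) :=
    (convex_ball _ _).inter ((convex_ball _ _).linear_preimage T.toLinearMap)
  refine exists_continuous_forall_mem_convex_of_local_const hS fun y₀ => ?_
  obtain ⟨w, hTw, hw⟩ := hC (y₀ - T (g y₀))
  have hdist : dist (g y₀ + w) (g y₀) < C * dist (T (g y₀)) y₀ + η := by
    rw [dist_self_add_left, dist_comm, dist_eq_norm]
    linarith
  have hT : dist (T (g y₀ + w)) y₀ < η := by simpa [hTw] using hη
  have h_cont : Continuous fun y => C * dist (T (g y)) y + η := by fun_prop
  have h_near : ∀ᶠ y in 𝓝 y₀, dist (g y₀ + w) (g y) < C * dist (T (g y)) y + η :=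
    (continuous_const.dist g.continuous).continuousAt.eventually_lt h_cont.continuousAt hdist
  have h_approx : ∀ᶠ y in 𝓝 y₀, dist (T (g y₀ + w)) y < η :=
    (continuous_const.dist continuous_id).continuousAt.eventually_lt continuousAt_const hT
  exact ⟨g y₀ + w, h_near.and h_approx⟩

/-- **Bartle–Graves theorem**. -/
theorem exists_continuousMap_rightInverse_of_surjective [CompleteSpace E] [CompleteSpace F]
    (T : E →L[ℝ] F) (hT : Function.Surjective T) :
    ∃ s : C(F, E), Function.RightInverse s T := by
  obtain ⟨C, hC₀, hC⟩ := T.exists_preimage_norm_le hT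
  choose improve h_improve using fun (n : ℕ) (g : C(F, E)) =>
    exists_continuousMap_approx_rightInverse T hC g (η := (1 / 2) ^ n) (by positivity)
  let g : ℕ → C(F, E) := fun n => Nat.rec (improve 0 0) (fun n g => improve (n + 1) g) n
  have hTg (n : ℕ) (y : F) : dist (T (g n y)) y < (1 / 2) ^ n := by
    cases n <;> exact (h_improve _ _ y).2
  have hgg (y : F) (n : ℕ) : dist (g n y) (g (n + 1) y) ≤ (C + 1) * (1 / 2) ^ n := by
    calc dist (g n y) (g (n + 1) y)
        = dist (improve (n + 1) (g n) y) (g n y) := dist_comm _ _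
      _ ≤ C * dist (T (g n y)) y + (1 / 2) ^ (n + 1) := (h_improve (n + 1) (g n) y).1.le
      _ ≤ C * (1 / 2) ^ n + (1 / 2) ^ n := by
        gcongr C * ?_ + ?_
        · exact (hTg n y).le
        · exact pow_le_pow_of_le_one (by norm_num) (by norm_num) n.le_succ
      _ = (C + 1) * (1 / 2) ^ n := by ring
  choose s hs using fun y => cauchySeq_tendsto_of_complete <|
    cauchySeq_of_le_geometric _ _ one_half_lt_one (hgg y)
  have h_unif : TendstoUniformly (fun n y => g n y) s atTop := by
    have h_bound : Tendsto (fun n : ℕ => (C + 1) * (1 / 2 : ℝ) ^ n / (1 - 1 / 2)) atTop (𝓝 0) := by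
      simpa using ((tendsto_pow_atTop_nhds_zero_of_lt_one (by norm_num)
        one_half_lt_one).const_mul (C + 1)).div_const (1 - 1 / 2 : ℝ)
    refine Metric.tendstoUniformly_iff.2 fun ε hε => ?_
    filter_upwards [h_bound.eventually_lt_const hε] with n hn y
    rw [dist_comm]
    exact (dist_le_of_le_geometric_of_tendsto _ _ one_half_lt_one (hgg y) (hs y) n).trans_lt hn
  have hTs (y : F) : Tendsto (fun n => T (g n y)) atTop (𝓝 y) :=
    tendsto_iff_dist_tendsto_zero.2 <| squeeze_zero (fun _ => dist_nonneg)
      (fun n => (hTg n y).le) (tendsto_pow_atTop_nhds_zero_of_lt_one (by norm_num) one_half_lt_one)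
  exact ⟨⟨s, h_unif.continuous (.of_forall fun n => (g n).continuous)⟩, fun y =>
    tendsto_nhds_unique ((T.continuous.tendsto _).comp (hs y)) (hTs y)⟩

end BartleGraves

section VanishingAlong

variable {α E : Type*} [TopologicalSpace α] [NormedAddCommGroup E] [NormedSpace ℝ E]

/-- The radial retraction of a normed space onto its closed ball of radius `c > 0`. -/
noncomputable def radialRetraction (c : ℝ) (v : E) : E := (c / max c ‖v‖) • v

lemma continuous_radialRetraction {c : ℝ} (hc : 0 < c) :
    Continuous (radialRetraction c : E → E) :=
  (continuous_const.div (by fun_prop) fun _ => (lt_max_of_lt_left hc).ne').smul continuous_id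

lemma norm_radialRetraction_le {c : ℝ} (hc : 0 < c) (v : E) : ‖radialRetraction c v‖ ≤ c := by
  have hmax : 0 < max c ‖v‖ := lt_max_of_lt_left hc
  rw [radialRetraction, norm_smul, Real.norm_of_nonneg (by positivity), div_mul_eq_mul_div,
    div_le_iff₀ hmax]
  gcongr
  exact le_max_right _ _

lemma radialRetraction_of_norm_le {c : ℝ} (hc : 0 < c) {v : E} (hv : ‖v‖ ≤ c) :
    radialRetraction c v = v := by
  rw [radialRetraction, max_eq_left hv, div_self hc.ne', one_smul]

/-- The bounded continuous functions tending to zero along `l`. Passing to the quotient by this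
submodule identifies functions that are asymptotically equal along `l`. -/
def vanishingAlong (E : Type*) [NormedAddCommGroup E] [NormedSpace ℝ E] (l : Filter α) :
    Submodule ℝ (α →ᵇ E) :=
  (zeroAtFilterSubmodule ℝ l).comap
    (ContinuousMap.coeFnLinearMap ℝ ∘ₗ BoundedContinuousFunction.toContinuousMapLinearMap α E ℝ)

variable {l : Filter α}

lemma mem_vanishingAlong {f : α →ᵇ E} : f ∈ vanishingAlong E l ↔ Tendsto f l (𝓝 0) := Iff.rfl

instance isClosed_vanishingAlong : IsClosed (vanishingAlong E l : Set (α →ᵇ E)) := by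
  refine isClosed_of_closure_subset fun f hf => Metric.tendsto_nhds.2 fun ε hε => ?_
  obtain ⟨g, hg, hfg⟩ := Metric.mem_closure_iff.1 hf (ε / 2) (half_pos hε)
  filter_upwards [Metric.tendsto_nhds.1 (mem_vanishingAlong.1 hg) (ε / 2) (half_pos hε)] with t ht
  calc dist (f t) 0 ≤ dist (f t) (g t) + dist (g t) 0 := dist_triangle _ _ _
    _ < ε / 2 + ε / 2 := add_lt_add ((f.dist_coe_le_dist t).trans_lt hfg) ht
    _ = ε := add_halves ε

lemma norm_mkQL_vanishingAlong_le {f : α →ᵇ E} {c : ℝ} (hc : 0 < c)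
    (hf : ∀ᶠ t in l, ‖f t‖ ≤ c) : ‖(vanishingAlong E l).mkQL f‖ ≤ c := by
  let g : α →ᵇ E := .ofNormedAddCommGroup (radialRetraction c ∘ f)
    ((continuous_radialRetraction hc).comp f.continuous) c fun t => norm_radialRetraction_le hc _
  have hfg : f - g ∈ vanishingAlong E l := by
    refine mem_vanishingAlong.2 (tendsto_const_nhds.congr' ?_)
    filter_upwards [hf] with t ht
    exact (sub_eq_zero.2 (radialRetraction_of_norm_le hc ht).symm).symm
  calc ‖(vanishingAlong E l).mkQL f‖ = ‖(vanishingAlong E l).mkQL g‖ :=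
        congrArg norm ((Submodule.Quotient.eq _).2 hfg)
    _ ≤ ‖g‖ := Submodule.Quotient.norm_mk_le _ g
    _ ≤ c := BoundedContinuousFunction.norm_ofNormedAddCommGroup_le _ hc.le _

theorem exists_continuousMap_tendsto_sub_of_eventually_norm_sub_le [CompleteSpace E]
    {X : Type*} [TopologicalSpace X] {F : X → α →ᵇ E}
    (hF : ∀ x, ∀ ε > 0, ∀ᶠ y in 𝓝 x, ∀ᶠ t in l, ‖F y t - F x t‖ ≤ ε) :
    ∃ G : C(X, α →ᵇ E), ∀ x, Tendsto (fun t => F x t - G x t) l (𝓝 0) := by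
  let q := (vanishingAlong E l).mkQL
  obtain ⟨s, hs⟩ := exists_continuousMap_rightInverse_of_surjective q
    (Submodule.mkQ_surjective _)
  have hqF : Continuous fun x => q (F x) := by
    refine continuous_iff_continuousAt.2 fun x => Metric.tendsto_nhds.2 fun ε hε => ?_
    filter_upwards [hF x (ε / 2) (half_pos hε)] with y hy
    rw [dist_eq_norm, ← map_sub]
    exact (norm_mkQL_vanishingAlong_le (half_pos hε) hy).trans_lt (half_lt_self hε)
  exact ⟨s.comp ⟨_, hqF⟩, fun x =>
    mem_vanishingAlong.1 ((Submodule.Quotient.eq _).1 (hs (q (F x))).symm)⟩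

end VanishingAlong

lemma exists_boundedContinuousFunction_eq_of_isBoundedUnder {ι E : Type*} [LinearOrder ι]
    [TopologicalSpace ι] [CompactIccSpace ι] [SeminormedAddCommGroup E] {x₀ : ι} {f : ι → E}
    (hf : ContinuousOn f (Ici x₀)) (hb : IsBoundedUnder (· ≤ ·) atTop (norm ∘ f)) :
    ∃ g : Ici x₀ →ᵇ E, ∀ t, g t = f t := by
  have : Nonempty ι := ⟨x₀⟩
  obtain ⟨c, hc⟩ := hb
  obtain ⟨T, hT⟩ := eventually_atTop.1 (eventually_map.1 hc)
  obtain ⟨C, hC⟩ := isCompact_Icc.exists_bound_of_continuousOn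
    (hf.mono (Icc_subset_Ici_self : Icc x₀ T ⊆ Ici x₀))
  refine ⟨.ofNormedAddCommGroup _ hf.domRestrict (max C c) fun t => ?_, fun _ => rfl⟩
  rcases le_total t.1 T with h | h
  · exact (hC t ⟨t.2, h⟩).trans (le_max_left _ _)
  · exact (hT t h).trans (le_max_right _ _)

lemma lt_of_sq_le_add_mul {p k m R : ℝ} (hp : 0 ≤ p) (hR : 0 < R) (hm : m ^ 2 ≤ p + k * m)
    (h : p + k * R < R * R) : m < R := by
  by_contra! hRm
  have hkR : k ≤ R := le_of_mul_le_mul_right (by linarith) hR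
  have hm₀ : 0 ≤ m := hR.le.trans hRm
  have h_mono : R * (R - k) ≤ m * (m - k) := by gcongr
  linarith

section CStarAlgebra

variable {A : Type*} [NonUnitalCStarAlgebra A]

lemma sq_norm_le_norm_star_mul_self_add_star_mul_self (x z : A) :
    ‖x‖ ^ 2 ≤ ‖star x * x + star z * z‖ := by
  let : PartialOrder A := CStarAlgebra.spectralOrder A
  have : StarOrderedRing A := CStarAlgebra.spectralOrderedRing A
  rw [sq, ← CStarRing.norm_star_mul_self]
  exact CStarAlgebra.norm_le_norm_of_nonneg_of_le (star_mul_self_nonneg x)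
    (le_add_of_nonneg_right (star_mul_self_nonneg z))

lemma sq_max_norm_le (x y z : A) (r : ℂ) :
    max ‖x‖ ‖z‖ ^ 2 ≤ ‖y * x + z * z - r • z‖ +
      (‖r‖ + ‖y - star x‖ + ‖z - star z‖) * max ‖x‖ ‖z‖ := by
  have hmax : max ‖x‖ ‖z‖ ^ 2 ≤ ‖star x * x + star z * z‖ := by
    rcases max_choice ‖x‖ ‖z‖ with h | h <;> rw [h]
    · exact sq_norm_le_norm_star_mul_self_add_star_mul_self x z
    · rw [add_comm]
      exact sq_norm_le_norm_star_mul_self_add_star_mul_self z x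
  have hsplit : star x * x + star z * z =
      (y * x + z * z - r • z) + r • z - (y - star x) * x - (z - star z) * z := by
    simp only [sub_mul]
    abel
  calc max ‖x‖ ‖z‖ ^ 2 ≤ ‖star x * x + star z * z‖ := hmax
    _ ≤ ‖y * x + z * z - r • z‖ + ‖r • z‖ + ‖(y - star x) * x‖ + ‖(z - star z) * z‖ := by
      rw [hsplit]
      refine (norm_sub_le _ _).trans (add_le_add_left ?_ _)
      exact (norm_sub_le _ _).trans (add_le_add_left (norm_add_le _ _) _)
    _ ≤ ‖y * x + z * z - r • z‖ + ‖r‖ * max ‖x‖ ‖z‖ + ‖y - star x‖ * max ‖x‖ ‖z‖ +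
        ‖z - star z‖ * max ‖x‖ ‖z‖ := by
      gcongr
      · exact (norm_smul_le _ _).trans (by gcongr; exact le_max_right _ _)
      · exact (norm_mul_le _ _).trans (by gcongr; exact le_max_left _ _)
      · exact (norm_mul_le _ _).trans (by gcongr; exact le_max_right _ _)
    _ = _ := by ring

lemma exists_isSelfAdjoint_star_mul_self_add_mul_self_eq_smul (a : A) :
    ∃ c : A, IsSelfAdjoint c ∧ star a * a + c * c = (2 * ‖a‖) • c := by
  -- `c = ‖a‖ - √(‖a‖² - a* a)` is the smaller root of the quadratic equation.
  let f : ℝ → ℝ := fun x => ‖a‖ - √(‖a‖ ^ 2 - x)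
  have hf : Continuous f := by fun_prop
  have hf₀ : f 0 = 0 := by simp [f]
  refine ⟨cfcₙ f (star a * a), cfcₙ_predicate f (star a * a), ?_⟩
  have hroot : ∀ x ∈ quasispectrum ℝ (star a * a), x + f x * f x = 2 * ‖a‖ * f x := by
    intro x hx
    have hx_le : x ≤ ‖a‖ ^ 2 := by
      rw [sq, ← CStarRing.norm_star_mul_self]
      exact (le_abs_self x).trans
        (NonUnitalIsometricContinuousFunctionalCalculus.norm_quasispectrum_le (𝕜 := ℝ) _ hx)
    linear_combination Real.mul_self_sqrt (sub_nonneg.2 hx_le)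
  calc star a * a + cfcₙ f (star a * a) * cfcₙ f (star a * a)
      = cfcₙ (fun x => x + f x * f x) (star a * a) := by
        rw [cfcₙ_add (fun x : ℝ => x) (fun x => f x * f x) (star a * a), cfcₙ_id' ℝ (star a * a),
          cfcₙ_mul f f (star a * a)]
    _ = cfcₙ (fun x => 2 * ‖a‖ * f x) (star a * a) := cfcₙ_congr hroot
    _ = (2 * ‖a‖) • cfcₙ f (star a * a) := cfcₙ_const_mul _ f (star a * a) hf.continuousOn hf₀

end CStarAlgebra

namespace IsAsymptoticHom

section Ring

variable {A B : Type*} [NonUnitalNormedRing A] [StarRing A] [Module ℂ A]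
  [NonUnitalNormedRing B] [StarRing B] [Module ℂ B] {φ : ℝ → A → B}

lemma tendsto_map_star (hφ : IsAsymptoticHom φ) (a : A) :
    Tendsto (fun t => φ t (star a) - star (φ t a)) atTop (𝓝 0) :=
  tendsto_zero_iff_norm_tendsto_zero.2 (hφ.2.1 a)

lemma tendsto_map_smul_add (hφ : IsAsymptoticHom φ) (a b : A) (c : ℂ) :
    Tendsto (fun t => φ t (c • a + b) - c • φ t a - φ t b) atTop (𝓝 0) :=
  tendsto_zero_iff_norm_tendsto_zero.2 (hφ.2.2.1 a b c)

lemma tendsto_map_mul (hφ : IsAsymptoticHom φ) (a b : A) :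
    Tendsto (fun t => φ t (a * b) - φ t a * φ t b) atTop (𝓝 0) :=
  tendsto_zero_iff_norm_tendsto_zero.2 (hφ.2.2.2 a b)

lemma tendsto_map_add (hφ : IsAsymptoticHom φ) (a b : A) :
    Tendsto (fun t => φ t (a + b) - φ t a - φ t b) atTop (𝓝 0) := by
  simpa only [one_smul] using hφ.tendsto_map_smul_add a b 1

lemma tendsto_map_zero (hφ : IsAsymptoticHom φ) : Tendsto (fun t => φ t 0) atTop (𝓝 0) := by
  simpa using (hφ.tendsto_map_add 0 0).neg

lemma tendsto_map_smul (hφ : IsAsymptoticHom φ) (c : ℂ) (a : A) :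
    Tendsto (fun t => φ t (c • a) - c • φ t a) atTop (𝓝 0) := by
  simpa using (hφ.tendsto_map_smul_add a 0 c).add hφ.tendsto_map_zero

lemma tendsto_map_sub (hφ : IsAsymptoticHom φ) (a b : A) :
    Tendsto (fun t => φ t (a - b) - (φ t a - φ t b)) atTop (𝓝 0) := by
  have h := hφ.tendsto_map_smul_add b a (-1)
  simp only [neg_one_smul, neg_add_eq_sub] at h
  exact h.congr fun t => by abel

end Ring

variable {A B : Type*} [NonUnitalCStarAlgebra A] [NonUnitalCStarAlgebra B] {φ : ℝ → A → B}

-- The optimal condition is `‖a‖ < R`; any multiple of `‖a‖` gives the Lipschitz estimate.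
lemma eventually_norm_map_lt (hφ : IsAsymptoticHom φ) {a : A} {R : ℝ} (hR : 2 * ‖a‖ < R) :
    ∀ᶠ t in atTop, ‖φ t a‖ < R := by
  obtain ⟨c, hc, hac⟩ := exists_isSelfAdjoint_star_mul_self_add_mul_self_eq_smul a
  let r : ℂ := (2 * ‖a‖ : ℝ)
  have hr : ‖r‖ = 2 * ‖a‖ := Complex.norm_of_nonneg (by positivity)
  have h_quad : Tendsto (fun t => φ t (star a) * φ t a + φ t c * φ t c - r • φ t c)
      atTop (𝓝 0) := by
    have h_add := hφ.tendsto_map_add (star a * a) (c * c)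
    rw [hac, ← Complex.coe_smul] at h_add
    have h := (((hφ.tendsto_map_smul r c).sub h_add).sub
      (hφ.tendsto_map_mul (star a) a)).sub (hφ.tendsto_map_mul c c)
    simp only [sub_zero] at h
    exact h.congr fun t => by abel
  have h_star : Tendsto (fun t => φ t c - star (φ t c)) atTop (𝓝 0) := by
    simpa only [hc.star_eq] using hφ.tendsto_map_star c
  have h_err : Tendsto (fun t => ‖φ t (star a) * φ t a + φ t c * φ t c - r • φ t c‖ +
      (‖r‖ + ‖φ t (star a) - star (φ t a)‖ + ‖φ t c - star (φ t c)‖) * R)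
      atTop (𝓝 (2 * ‖a‖ * R)) := by
    simpa [hr] using h_quad.norm.add
      (((hφ.tendsto_map_star a).norm.const_add ‖r‖).add h_star.norm |>.mul_const R)
  have hR₀ : 0 < R := (by positivity : 0 ≤ 2 * ‖a‖).trans_lt hR
  filter_upwards [h_err.eventually_lt_const (mul_lt_mul_of_pos_right hR hR₀)] with t ht
  have h_sq := sq_max_norm_le (φ t a) (φ t (star a)) (φ t c) r
  exact (le_max_left _ _).trans_lt (lt_of_sq_le_add_mul (norm_nonneg _) hR₀ h_sq ht)

lemma isBoundedUnder_norm_map (hφ : IsAsymptoticHom φ) (a : A) :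
    IsBoundedUnder (· ≤ ·) atTop (norm ∘ fun t => φ t a) :=
  isBoundedUnder_of_eventually_le <|
    (hφ.eventually_norm_map_lt (lt_add_one _)).mono fun _ h => h.le

lemma eventually_norm_map_sub_map_lt (hφ : IsAsymptoticHom φ) {a b : A} {R : ℝ}
    (hR : 2 * ‖a - b‖ < R) : ∀ᶠ t in atTop, ‖φ t a - φ t b‖ < R := by
  obtain ⟨R', hR', hR'R⟩ := exists_between hR
  filter_upwards [hφ.eventually_norm_map_lt hR',
    (hφ.tendsto_map_sub a b).norm.eventually_lt_const (u := R - R') (by simpa using hR'R)]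
    with t h_lt h_sub
  calc ‖φ t a - φ t b‖ ≤ ‖φ t (a - b)‖ + ‖φ t (a - b) - (φ t a - φ t b)‖ :=
        norm_le_norm_add_norm_sub _ _
    _ < R' + (R - R') := add_lt_add h_lt h_sub
    _ = R := add_sub_cancel _ _

lemma exists_boundedContinuousFunction_eq (hφ : IsAsymptoticHom φ) (a : A) :
    ∃ f : Ici (1 : ℝ) →ᵇ B, ∀ t, f t = φ t a :=
  exists_boundedContinuousFunction_eq_of_isBoundedUnder (hφ.1 a) (hφ.isBoundedUnder_norm_map a)

lemma of_tendsto_sub_zero (hφ : IsAsymptoticHom φ) {ψ : ℝ → A → B}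
    (hψ : ∀ a, ContinuousOn (fun t => ψ t a) (Ici 1))
    (h : ∀ a, Tendsto (fun t => φ t a - ψ t a) atTop (𝓝 0)) : IsAsymptoticHom ψ := by
  refine ⟨hψ, fun a => ?_, fun a b c => ?_, fun a b => ?_⟩ <;>
    refine tendsto_zero_iff_norm_tendsto_zero.1 ?_
  · have := ((hφ.tendsto_map_star a).sub (h (star a))).add (h a).star
    simp only [star_zero, sub_zero, add_zero] at this
    exact this.congr fun t => by rw [star_sub]; abel
  · have := (((hφ.tendsto_map_smul_add a b c).sub (h (c • a + b))).add
      ((h a).const_smul c)).add (h b)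
    simp only [smul_zero, sub_zero, add_zero] at this
    exact this.congr fun t => by rw [smul_sub]; abel
  · have h_left : Tendsto (fun t => φ t a * (φ t b - ψ t b)) atTop (𝓝 0) :=
      isBoundedUnder_le_mul_tendsto_zero (hφ.isBoundedUnder_norm_map a) (h b)
    have h_right : Tendsto (fun t => (φ t a - ψ t a) * φ t b) atTop (𝓝 0) :=
      (h a).zero_mul_isBoundedUnder_le (hφ.isBoundedUnder_norm_map b)
    have := ((((hφ.tendsto_map_mul a b).sub (h (a * b))).add h_left).add h_right).sub
      ((h a).mul (h b))
    simp only [mul_zero, sub_zero, add_zero] at this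
    exact this.congr fun t => by simp only [mul_sub, sub_mul]; abel

end IsAsymptoticHom

theorem stmt_6_general {A B : Type*} [NonUnitalCStarAlgebra A] [NonUnitalCStarAlgebra B]
    (φ : ℝ → A → B) (hφ : IsAsymptoticHom φ) :
    ∃ φ' : ℝ → A → B, IsAsymptoticHom φ' ∧
      (∀ a : A, Tendsto (fun t => ‖φ t a - φ' t a‖) atTop (nhds 0)) ∧
      (∀ a : A, ∀ ε > (0:ℝ), ∃ δ > (0:ℝ), ∀ t ∈ Ici (1:ℝ), ∀ b : A,
        ‖a - b‖ < δ → ‖φ' t a - φ' t b‖ < ε) := by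
  have h_val : Tendsto ((↑) : Ici (1 : ℝ) → ℝ) atTop atTop :=
    tendsto_comp_val_Ici_atTop.2 tendsto_id
  have h_proj : Continuous (projIci (1 : ℝ)) := by unfold projIci; fun_prop
  choose F hF using hφ.exists_boundedContinuousFunction_eq
  obtain ⟨G, hG⟩ : ∃ G : C(A, Ici (1 : ℝ) →ᵇ B),
      ∀ a, Tendsto (fun t => F a t - G a t) atTop (𝓝 0) := by
    refine exists_continuousMap_tendsto_sub_of_eventually_norm_sub_le fun a ε hε => ?_
    filter_upwards [Metric.ball_mem_nhds a (half_pos hε)] with b hb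
    rw [mem_ball_iff_norm] at hb
    have h := hφ.eventually_norm_map_sub_map_lt (a := b) (b := a) (R := ε) (by linarith)
    simpa only [hF] using (h_val.eventually h).mono fun _ ht => ht.le
  have h_equiv (a : A) : Tendsto (fun t => φ t a - IciExtend (G a) t) atTop (𝓝 0) :=
    (tendsto_comp_val_Ici_atTop (a := 1)).1 (by simpa [hF] using hG a)
  refine ⟨fun t a => IciExtend (G a) t, hφ.of_tendsto_sub_zero (fun a => ?_) h_equiv,
    fun a => tendsto_zero_iff_norm_tendsto_zero.1 (h_equiv a), fun a ε hε => ?_⟩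
  · exact ((G a).continuous.comp h_proj).continuousOn
  · obtain ⟨δ, hδ, hGδ⟩ := Metric.continuous_iff.1 G.continuous a ε hε
    refine ⟨δ, hδ, fun t _ b hab => ?_⟩
    rw [← dist_eq_norm, dist_comm] at hab ⊢
    exact (BoundedContinuousFunction.dist_coe_le_dist _).trans_lt (hGδ b hab)

/-- Every asymptotic homomorphism `φ : A → B` between separable C*-algebras is
equivalent to an equicontinuous asymptotic homomorphism `φ' : A → B`. -/
theorem stmt_6 {A B : Type*} [NonUnitalCStarAlgebra A] [TopologicalSpace.SeparableSpace A]
    [NonUnitalCStarAlgebra B] [TopologicalSpace.SeparableSpace B]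
    (φ : ℝ → A → B) (hφ : IsAsymptoticHom φ) :
    ∃ φ' : ℝ → A → B, IsAsymptoticHom φ' ∧
      (∀ a : A, Tendsto (fun t => ‖φ t a - φ' t a‖) atTop (nhds 0)) ∧
      (∀ a : A, ∀ ε > (0:ℝ), ∃ δ > (0:ℝ), ∀ t ∈ Ici (1:ℝ), ∀ b : A,
        ‖a - b‖ < δ → ‖φ' t a - φ' t b‖ < ε) :=
  stmt_6_general φ hφ
end
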